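/- Let A be a 2-Calabi-Yau tilted algebra, J = A e_i A, B = A/J, and X ∈ J^⊥. Then Ext^1_A(X, B) = 0. -/

import Mathlib

noncomputable section

open CategoryTheory Opposite DirectSum MulOpposite

/-- An idempotent is primitive if it is nonzero and is not the sum of two nonzero
orthogonal idempotents. -/
def IsPrimitiveIdempotent {A : Type} [Ring A] (a : A) : Prop :=
  IsIdempotentElem a ∧ a ≠ 0 ∧
    ∀ b c : A, IsIdempotentElem b → IsIdempotentElem c → b * c = 0 → c * b = 0 →
      a = b + c → b = 0 ∨ c = 0

/-- A complete family of orthogonal idempotents. -/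
def CompOrthIdem {A ι : Type} [Ring A] [Fintype ι] (e : ι → A) : Prop :=
  (∀ i j, i ≠ j → e i * e j = 0) ∧ (∀ i, IsIdempotentElem (e i)) ∧ (∑ i, e i) = 1

/-- The two-sided ideal `A e A` generated by an idempotent `e`, viewed as a
right `A`-module (i.e. a module over `Aᵐᵒᵖ`): it is the right `A`-submodule of `A`
spanned by all elements `b * e`. -/
def genIdeal {A : Type} [Ring A] (e : A) : Submodule Aᵐᵒᵖ A :=
  Submodule.span Aᵐᵒᵖ {x | ∃ b : A, x = b * e}

/-- The indecomposable projective right module `e A` at the idempotent `e`. -/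
def pIdeal {A : Type} [Ring A] (e : A) : Submodule Aᵐᵒᵖ A :=
  Submodule.span Aᵐᵒᵖ ({e} : Set A)

/-- The radical of a module: the intersection of all maximal submodules.
For a finite dimensional module `M` over a finite dimensional algebra this is `M · rad A`. -/
def radical (R M : Type) [Ring R] [AddCommGroup M] [Module R M] : Submodule R M :=
  sInf {m | IsCoatom m}

/-- `Ext¹` for right `A`-modules, as a `k`-module. -/
abbrev rext1 (k : Type) [Field k] (A : Type) [Ring A] [Algebra k A]
    (M N : ModuleCat.{0} Aᵐᵒᵖ) : ModuleCat.{0} k :=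
  ((Ext k (ModuleCat.{0} Aᵐᵒᵖ) 1).obj (op M)).obj N

/-- A right `A`-module `M` is Cohen-Macaulay if `Ext¹_A(M, A) = 0`. -/
def IsCM (k : Type) [Field k] (A : Type) [Ring A] [Algebra k A]
    (M : ModuleCat.{0} Aᵐᵒᵖ) : Prop :=
  Subsingleton (rext1 k A M (ModuleCat.of Aᵐᵒᵖ A))

/-- A witness that `B` is a 2-Calabi-Yau tilted algebra: a Hom-finite, idempotent
complete (hence Krull-Schmidt), `k`-linear triangulated 2-Calabi-Yau category `C`
together with a cluster-tilting object `T` such that `B ≅ End_C T`. -/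
structure CYTiltedWitness (k : Type) [Field k] (B : Type) [Ring B] [Algebra k B] :
    Type 1 where
  C : Type
  [cat : Category.{0} C]
  [pre : Preadditive C]
  [lin : Linear k C]
  [shift : HasShift C ℤ]
  [zero : Limits.HasZeroObject C]
  [shiftAdd : ∀ n : ℤ, (shiftFunctor C n).Additive]
  [tri : Pretriangulated C]
  [biprod : Limits.HasFiniteBiproducts C]
  [idem : IsIdempotentComplete C]
  homFinite : ∀ X Y : C, FiniteDimensional k (X ⟶ Y)
  /-- the 2-Calabi-Yau property: a Serre duality `D Hom(X,Y) ≅ Hom(Y, X⟦2⟧)` -/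
  serre : ∀ X Y : C, Nonempty ((X ⟶ Y) ≃ₗ[k] Module.Dual k (Y ⟶ X⟦(2:ℤ)⟧))
  T : C
  /-- `T` is cluster-tilting: `add T = {X | Ext¹(T, X) = 0}` -/
  clusterTilting : ∀ X : C, (∀ f : T ⟶ X⟦(1:ℤ)⟧, f = 0) ↔
    ∃ (n : ℕ) (s : X ⟶ ⨁ (fun _ : Fin n => T)) (r : (⨁ (fun _ : Fin n => T)) ⟶ X),
      s ≫ r = 𝟙 X
  algIso : Nonempty (B ≃ₐ[k] End T)

/-- `B` is a 2-Calabi-Yau tilted algebra. -/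
def IsCYTilted (k : Type) [Field k] (B : Type) [Ring B] [Algebra k B] : Prop :=
  Nonempty (CYTiltedWitness k B)

/-- `M` is a module over `B = A/AeA`: the ideal `J = AeA` acts trivially. -/
def JTriv {A : Type} [Ring A] (e : A) (M : Type) [AddCommGroup M]
    [Module Aᵐᵒᵖ M] : Prop :=
  ∀ a ∈ genIdeal e, ∀ m : M, (MulOpposite.op a) • m = 0

/-- `N` belongs to `add J`, i.e. is a direct summand of a finite direct sum of
copies of `J = AeA`. -/
def InAddJ {A : Type} [Ring A] (e : A) (N : ModuleCat.{0} Aᵐᵒᵖ) : Prop :=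
  ∃ (n : ℕ) (s : N →ₗ[Aᵐᵒᵖ] (Fin n → ↥(genIdeal e)))
    (r : (Fin n → ↥(genIdeal e)) →ₗ[Aᵐᵒᵖ] N), r ∘ₗ s = LinearMap.id

/-- `f : J_X → X` is an `add J`-approximation: `J_X ∈ add J` and every map from a
module of `add J` to `X` factors through `f`. -/
def IsAddJApprox {A : Type} [Ring A] (e : A) (JX X : ModuleCat.{0} Aᵐᵒᵖ)
    (f : JX →ₗ[Aᵐᵒᵖ] X) : Prop :=
  InAddJ e JX ∧ ∀ (Z : ModuleCat.{0} Aᵐᵒᵖ), InAddJ e Z →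
    ∀ g : Z →ₗ[Aᵐᵒᵖ] X, ∃ h : Z →ₗ[Aᵐᵒᵖ] JX, f ∘ₗ h = g

/-!
Write `F = Hom(T, -)` for the cluster-tilting object `T` with `End T ≅ A`, and `S = [2]`. By the
long exact sequence of `0 → J → A → B → 0` and `Ext¹(X, A) = 0`, it is enough to show
`Ext²(X, J) = 0`.

The trace. Only the dimensions of the Serre duality isomorphisms matter: they force the socle of
the right `A`-module `F (S T)` to be so small that some functional `t` on `F (S T)` vanishes on no
nonzero submodule. The pairings `(p, f) ↦ t (p ≫ f)` between `Hom(T, y)` and `Hom(y, S T)` are then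
perfect for every `y`. So `F (S T)` is injective, and `S` has an adjoint with respect to these
pairings, an automorphism of `add T` called the twist below.

Duality. Let `w : P₁ ⟶ P₀` in `add T` have cone `y`, and let `M` be the cokernel of
`F (twist w)`. An approximation triangle of `y[-1]`, shifted, is an injective coresolution of
`F y`. A map `f : x ⟶ y[1]` yields `x ⟶ S P₁`, killed by `S w`, that is, a functional on
`Hom(P₁, x)` that vanishes on `twist w ≫ Hom(P₀, x)`. If `Ext¹(M, F x) = 0`, this functional
extends along an embedding of `F x` into an injective, and then `f` lifts through the
coresolution. Hence `Ext²(F x, F y) = 0`.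

Ideals. If `J` is stable under the twist, then `M ≅ F y` for `F y ≅ J`, so `Ext¹(J, X) = 0` gives
`Ext²(X, J) = 0`. If `J` is generated by an idempotent `ε` with image `Tₑ`, then `ε` kills `F y` iff
`Hom(Tₑ, y) = 0` iff `Hom(y, S Tₑ) = 0` iff the twist of `ε` kills `F y`, so `ε` and its twist
generate the same ideal.
-/

section Homological

open Limits

universe w v u

variable {D : Type u} [Category.{v} D] [Abelian D]

theorem subsingleton_leftDerived_ext_iff [HasExt.{w} D] [EnoughProjectives D]
    (k : Type*) [Field k] [Linear k D] (X Y : D) (n : ℕ) :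
    Subsingleton (((Ext k D (n + 1)).obj (op X)).obj Y) ↔
      Subsingleton (Abelian.Ext.{w} X Y (n + 1)) := by
  obtain ⟨P⟩ : Nonempty (ProjectiveResolution X) := HasProjectiveResolution.out
  have exact_iff : Subsingleton (((Ext k D (n + 1)).obj (op X)).obj Y) ↔
      ∀ g : P.complex.X (n + 1) ⟶ Y, P.complex.d (n + 2) (n + 1) ≫ g = 0 →
        ∃ h : P.complex.X n ⟶ Y, P.complex.d (n + 1) n ≫ h = g := by
    rw [← ModuleCat.isZero_iff_subsingleton, (P.isoExt (n + 1) Y).isZero_iff,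
      ← HomologicalComplex.exactAt_iff_isZero_homology,
      HomologicalComplex.exactAt_iff' _ n (n + 1) (n + 2) (by simp) (by simp),
      ShortComplex.moduleCat_exact_iff]
    exact Iff.rfl
  rw [exact_iff]
  constructor
  · refine fun h ↦ subsingleton_of_forall_eq 0 fun x ↦ ?_
    obtain ⟨g, hg, rfl⟩ := P.extMk_surjective x (n + 2) rfl
    exact (P.extMk_eq_zero_iff g (n + 2) rfl hg n rfl).2 (h g hg)
  · exact fun _ g hg ↦ (P.extMk_eq_zero_iff g (n + 2) rfl hg n rfl).1 (Subsingleton.elim _ _)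

theorem nonempty_iso_of_exact_of_epi {P₁ P₀ M M' : D} {w : P₁ ⟶ P₀} {c : P₀ ⟶ M} {c' : P₀ ⟶ M'}
    {hc : w ≫ c = 0} {hc' : w ≫ c' = 0} (exact : (ShortComplex.mk w c hc).Exact)
    (exact' : (ShortComplex.mk w c' hc').Exact) [Epi c] [Epi c'] : Nonempty (M ≅ M') :=
  have : Epi (ShortComplex.mk w c hc).g := ‹Epi c›
  have : Epi (ShortComplex.mk w c' hc').g := ‹Epi c'›
  ⟨exact.gIsCokernel.coconePointUniqueUpToIso exact'.gIsCokernel⟩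

variable [HasExt.{w} D]

theorem subsingleton_ext_of_iso {X X' Y Y' : D} (φ : X ≅ X') (ψ : Y ≅ Y') {n : ℕ}
    (h : Subsingleton (Abelian.Ext.{w} X Y n)) : Subsingleton (Abelian.Ext.{w} X' Y' n) :=
  (((Abelian.extFunctor n).mapIso φ.symm.op).app Y ≪≫
    (Abelian.extFunctorObj X' n).mapIso ψ).addCommGroupIsoToAddEquiv.subsingleton_congr.1 h

theorem exists_lift_of_subsingleton_ext {S : ShortComplex D} (hS : S.ShortExact) {X : D}
    [Subsingleton (Abelian.Ext.{w} X S.X₁ 1)] (f : X ⟶ S.X₃) : ∃ l : X ⟶ S.X₂, l ≫ S.g = f := by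
  obtain ⟨l, hl⟩ := Abelian.Ext.covariant_sequence_exact₃ X hS (Abelian.Ext.mk₀ f) (n₁ := 1) rfl
    (Subsingleton.elim _ _)
  obtain ⟨l, rfl⟩ := Abelian.Ext.homEquiv₀.symm.surjective l
  refine ⟨l, Abelian.Ext.homEquiv₀.symm.injective ?_⟩
  simpa using hl

theorem exists_factorization_of_subsingleton_ext {P₁ P₀ M X I : D} {w : P₁ ⟶ P₀} {c : P₀ ⟶ M}
    (hwc : w ≫ c = 0) (hc : (ShortComplex.mk w c hwc).Exact) [Epi c] (i : X ⟶ I) [Mono i]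
    [Subsingleton (Abelian.Ext.{w} M X 1)] {p : P₁ ⟶ X} {v : P₀ ⟶ I} (hpv : p ≫ i = w ≫ v) :
    ∃ q : P₀ ⟶ X, w ≫ q = p := by
  let S := ShortComplex.mk i (cokernel.π i) (cokernel.condition i)
  have hS : S.ShortExact := { exact := ShortComplex.exact_cokernel i }
  obtain ⟨θ, hθ⟩ : ∃ θ : M ⟶ cokernel i, c ≫ θ = v ≫ cokernel.π i :=
    ⟨hc.desc (v ≫ cokernel.π i) (by simp [← reassoc_of% hpv]), hc.g_desc _ _⟩
  obtain ⟨l, hl⟩ : ∃ l : M ⟶ I, l ≫ cokernel.π i = θ :=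
    haveI : Subsingleton (Abelian.Ext.{w} M S.X₁ 1) := ‹_›
    exists_lift_of_subsingleton_ext hS θ
  obtain ⟨q, hq⟩ : ∃ q : P₀ ⟶ X, q ≫ i = v - c ≫ l :=
    ⟨hS.exact.lift (v - c ≫ l) (by simp [S, hl, hθ]), hS.exact.lift_f _ _⟩
  refine ⟨q, (cancel_mono i).1 ?_⟩
  rw [Category.assoc, hq, Preadditive.comp_sub, reassoc_of% hwc, zero_comp, sub_zero, hpv]

theorem subsingleton_ext_of_shortExact {S : ShortComplex D} (hS : S.ShortExact) {X : D} {n : ℕ}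
    [Subsingleton (Abelian.Ext.{w} X S.X₂ n)] [Subsingleton (Abelian.Ext.{w} X S.X₁ (n + 1))] :
    Subsingleton (Abelian.Ext.{w} X S.X₃ n) := by
  refine subsingleton_of_forall_eq 0 fun x ↦ ?_
  obtain ⟨y, rfl⟩ := Abelian.Ext.covariant_sequence_exact₃ X hS x rfl (Subsingleton.elim _ _)
  rw [Subsingleton.elim y 0, Abelian.Ext.zero_comp]

theorem subsingleton_ext_one_of_forall_exists_lift {S : ShortComplex D} (hS : S.ShortExact)
    [Injective S.X₂] {X : D} (hX : ∀ f : X ⟶ S.X₃, ∃ l : X ⟶ S.X₂, l ≫ S.g = f) :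
    Subsingleton (Abelian.Ext.{w} X S.X₁ 1) := by
  refine subsingleton_of_forall_eq 0 fun x ↦ ?_
  obtain ⟨y, rfl⟩ := Abelian.Ext.covariant_sequence_exact₁ X hS x
    (Abelian.Ext.eq_zero_of_injective _) (zero_add 1)
  obtain ⟨f, rfl⟩ := Abelian.Ext.homEquiv₀.symm.surjective y
  obtain ⟨l, rfl⟩ := hX f
  rw [Abelian.Ext.homEquiv₀_symm_apply, ← Abelian.Ext.mk₀_comp_mk₀,
    Abelian.Ext.comp_assoc_of_second_deg_zero, hS.comp_extClass, Abelian.Ext.comp_zero]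

theorem subsingleton_ext_succ_of_shortExact {S : ShortComplex D} (hS : S.ShortExact)
    [Injective S.X₂] {X : D} {n : ℕ} [Subsingleton (Abelian.Ext.{w} X S.X₃ (n + 1))] :
    Subsingleton (Abelian.Ext.{w} X S.X₁ (n + 2)) := by
  refine subsingleton_of_forall_eq 0 fun x ↦ ?_
  obtain ⟨y, rfl⟩ := Abelian.Ext.covariant_sequence_exact₁ X hS x
    (Abelian.Ext.eq_zero_of_injective _) rfl
  rw [Subsingleton.elim y 0, Abelian.Ext.zero_comp]

theorem subsingleton_ext_two_of_injective_coresolution {A I₀ I₁ Z X : D} [Injective I₀]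
    [Injective I₁] {i : A ⟶ I₀} {d₀ : I₀ ⟶ I₁} {d₁ : I₁ ⟶ Z} [Mono i] (hi : i ≫ d₀ = 0)
    (hd : d₀ ≫ d₁ = 0) (exact₀ : (ShortComplex.mk i d₀ hi).Exact)
    (exact₁ : (ShortComplex.mk d₀ d₁ hd).Exact)
    (hX : ∀ f : X ⟶ Z, ∃ l : X ⟶ I₁, l ≫ d₁ = f) :
    Subsingleton (Abelian.Ext.{w} X A 2) := by
  let S₀ := ShortComplex.mk i (cokernel.π i) (cokernel.condition i)
  have hS₀ : S₀.ShortExact := { exact := ShortComplex.exact_cokernel i }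
  let j : cokernel i ⟶ I₁ := cokernel.desc i d₀ hi
  have : Mono j := exact₀.mono_cokernelDesc
  let S₁ := ShortComplex.mk j (cokernel.π j) (cokernel.condition j)
  have hS₁ : S₁.ShortExact := { exact := ShortComplex.exact_cokernel j }
  have hj : j ≫ d₁ = 0 := by simp [j, ← cancel_epi (cokernel.π i), hd]
  let m : cokernel j ⟶ Z := cokernel.desc j d₁ hj
  have : Mono m :=
    let φ : ShortComplex.mk d₀ d₁ hd ⟶ ShortComplex.mk j d₁ hj :=
      { τ₁ := cokernel.π i, τ₂ := 𝟙 _, τ₃ := 𝟙 _ }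
    have : Epi φ.τ₁ := inferInstanceAs (Epi (cokernel.π i))
    have : IsIso φ.τ₂ := inferInstanceAs (IsIso (𝟙 _))
    have : Mono φ.τ₃ := inferInstanceAs (Mono (𝟙 _))
    ((ShortComplex.exact_iff_of_epi_of_isIso_of_mono φ).1 exact₁).mono_cokernelDesc
  have : Injective S₀.X₂ := ‹Injective I₀›
  have : Injective S₁.X₂ := ‹Injective I₁›
  have : Subsingleton (Abelian.Ext.{w} X S₀.X₃ 1) :=
    subsingleton_ext_one_of_forall_exists_lift hS₁ fun f ↦ by
      obtain ⟨l, hl⟩ := hX (f ≫ m)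
      refine ⟨l, (cancel_mono m).1 ?_⟩
      simpa [S₁, m] using hl
  exact subsingleton_ext_succ_of_shortExact hS₀

end Homological

section Functional

variable {k R Q : Type*} [Field k] [Ring R] [AddCommGroup Q] [Module k Q] [Module R Q]

theorem exists_functional_eq_on_disjoint {N S : Submodule k Q} (hNS : Disjoint N S)
    (t : Q →ₗ[k] k) (h : S →ₗ[k] k) :
    ∃ t' : Q →ₗ[k] k, (∀ x ∈ N, t' x = t x) ∧ ∀ s : S, t' s = h s := by
  have ker_eq_bot : LinearMap.ker (N.subtype.coprod S.subtype) = ⊥ := by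
    rw [LinearMap.ker_coprod_of_disjoint_range _ _ (by simpa using hNS)]
    simp
  obtain ⟨ρ, hρ⟩ := (N.subtype.coprod S.subtype).exists_leftInverse_of_injective ker_eq_bot
  refine ⟨(t.domRestrict N).coprod h ∘ₗ ρ, fun x hx ↦ ?_, fun s ↦ ?_⟩
  · have : ρ x = (⟨x, hx⟩, 0) := by simpa using LinearMap.congr_fun hρ (⟨x, hx⟩, 0)
    simp [this]
  · have : ρ s = (0, s) := by simpa using LinearMap.congr_fun hρ (0, s)
    simp [this]

/-- A functional `t` is nondegenerate on the submodule `N` if no nonzero `q ∈ N` has its whole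
orbit `R • q` in the kernel of `t`. -/
def NondegenerateOn (t : Q →ₗ[k] k) (N : Submodule R Q) : Prop :=
  ∀ q ∈ N, (∀ r : R, t (r • q) = 0) → q = 0

variable [Algebra k R] [IsScalarTower k R Q]

theorem NondegenerateOn.exists_sup {t : Q →ₗ[k] k} {N S : Submodule R Q}
    (ht : NondegenerateOn t N) (hS : IsSimpleModule R S) (hNS : Disjoint N S) (h : S →ₗ[k] k)
    (hh : ∀ g : S →ₗ[R] N, ∃ s, h s ≠ t (g s)) :
    ∃ t' : Q →ₗ[k] k, NondegenerateOn t' (N ⊔ S) := by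
  obtain ⟨t', htN, htS⟩ := exists_functional_eq_on_disjoint
    (N := N.restrictScalars k) (S := S.restrictScalars k)
    (Submodule.disjoint_def.2 fun x hx ↦ Submodule.disjoint_def.1 hNS x hx) t h
  refine ⟨t', fun q hq hq0 ↦ ?_⟩
  obtain ⟨n, hn, s, hs, rfl⟩ := Submodule.mem_sup.1 hq
  lift n to N using hn
  lift s to S using hs
  have sum_eq_zero (r : R) : t (r • n : N) + h (r • s) = 0 := by
    have htSr : t' (r • s : S) = h (r • s) := htS (r • s)
    rw [← htN _ (r • n).2, ← htSr, ← map_add]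
    simpa using hq0 r
  by_contra hns
  have s_ne : s ≠ 0 := by
    rintro rfl
    exact hns (by simpa using ht n n.2 fun r ↦ by simpa using sum_eq_zero r)
  let f := LinearMap.toSpanSingleton R S s
  have hf : Function.Surjective f := IsSimpleModule.toSpanSingleton_surjective R s_ne
  have hker : LinearMap.ker f ≤ LinearMap.ker (LinearMap.toSpanSingleton R N (-n)) := by
    intro r hr
    have hrs : r • s = 0 := hr
    have hrn : r • n = 0 := Subtype.ext <| ht _ (r • n).2 fun r' ↦ by
      simpa [mul_smul, hrs] using sum_eq_zero (r' * r)
    simp [hrn]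
  let g : S →ₗ[R] N := (LinearMap.ker f).liftQ _ hker ∘ₗ (f.quotKerEquivOfSurjective hf).symm
  have hg (r : R) : g (r • s) = -(r • n) := by
    have : (f.quotKerEquivOfSurjective hf).symm (r • s) = Submodule.Quotient.mk r :=
      f.quotKerEquivOfSurjective_symm_apply hf r
    change (LinearMap.ker f).liftQ _ hker ((f.quotKerEquivOfSurjective hf).symm (r • s)) = _
    rw [this]
    simp
  obtain ⟨_, hs'⟩ := hh g
  obtain ⟨r, rfl⟩ := hf ‹_›
  refine hs' ?_
  rw [LinearMap.toSpanSingleton_apply, hg, Submodule.coe_neg, map_neg]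
  exact eq_neg_of_add_eq_zero_right (sum_eq_zero r)

theorem exists_ne_functional_comp [FiniteDimensional k Q] (t : Q →ₗ[k] k) {N S : Submodule R Q}
    (hSN : ¬ S ≤ N) (hS : Module.finrank k (S →ₗ[R] Q) ≤ Module.finrank k S) :
    ∃ h : S →ₗ[k] k, ∀ g : S →ₗ[R] N, ∃ s, h s ≠ t (g s) := by
  have (M : Submodule R Q) : FiniteDimensional k M := Module.Finite.of_injective
    (M.subtype.restrictScalars k) Subtype.val_injective
  have : FiniteDimensional k (S →ₗ[R] Q) := Module.Finite.of_injective
    (LinearMap.restrictScalarsₗ k R S Q k) (LinearMap.restrictScalars_injective k)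
  have : FiniteDimensional k (S →ₗ[R] N) := Module.Finite.of_injective
    (LinearMap.restrictScalarsₗ k R S N k) (LinearMap.restrictScalars_injective k)
  let incl : (S →ₗ[R] N) →ₗ[k] (S →ₗ[R] Q) := N.subtype.compRight k
  have incl_injective : Function.Injective incl := fun f g hfg ↦
    (LinearMap.cancel_left N.injective_subtype).1 hfg
  have lt : Module.finrank k (S →ₗ[R] N) < Module.finrank k (S →ₗ[R] Q) := by
    refine (LinearMap.finrank_le_finrank_of_injective incl_injective).lt_of_ne fun heq ↦ hSN ?_
    obtain ⟨f, hf⟩ :=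
      (LinearMap.injective_iff_surjective_of_finrank_eq_finrank heq).1 incl_injective S.subtype
    intro x hx
    rw [← show (f ⟨x, hx⟩ : Q) = x from LinearMap.congr_fun hf ⟨x, hx⟩]
    exact (f ⟨x, hx⟩).2
  let compFunctional : (S →ₗ[R] N) →ₗ[k] Module.Dual k S :=
    t.compRight k ∘ₗ LinearMap.restrictScalarsₗ k R S Q k ∘ₗ incl
  have not_surjective : ¬ Function.Surjective compFunctional := fun hsurj ↦ by
    have := LinearMap.finrank_le_finrank_of_surjective hsurj
    rw [Subspace.dual_finrank_eq] at this
    omega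
  obtain ⟨h, hh⟩ := not_forall.1 not_surjective
  refine ⟨h, fun g ↦ ?_⟩
  by_contra! hg
  exact hh ⟨g, LinearMap.ext fun s ↦ (hg s).symm⟩

theorem exists_nondegenerate_functional [FiniteDimensional k Q]
    (hQ : ∀ S : Submodule R Q, IsSimpleModule R S →
      Module.finrank k (S →ₗ[R] Q) ≤ Module.finrank k S) :
    ∃ t : Q →ₗ[k] k, ∀ q, (∀ r : R, t (r • q) = 0) → q = 0 := by
  have : IsNoetherian R Q := isNoetherian_of_tower k inferInstance
  have : IsArtinian R Q := isArtinian_of_tower k inferInstance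
  obtain ⟨N, ⟨t, ht⟩, hmax⟩ := wellFounded_gt.has_min
    {N : Submodule R Q | ∃ t : Q →ₗ[k] k, NondegenerateOn t N}
    ⟨⊥, 0, fun q hq _ ↦ (Submodule.mem_bot R).1 hq⟩
  refine ⟨t, fun q hq ↦ ?_⟩
  by_contra hq_ne
  obtain ⟨S, hS, hSq⟩ := (IsAtomic.eq_bot_or_exists_atom_le (R ∙ q)).resolve_left
    (by simpa [Submodule.span_singleton_eq_bot] using hq_ne)
  have hSN : ¬ S ≤ N := fun hle ↦ hS.1 <| (Submodule.eq_bot_iff S).2 fun s hs ↦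
    ht s (hle hs) fun r ↦ by
      obtain ⟨r', rfl⟩ := Submodule.mem_span_singleton.1 (hSq hs)
      rw [smul_smul]
      exact hq _
  have hS_simple : IsSimpleModule R S := isSimpleModule_iff_isAtom.2 hS
  obtain ⟨h, hh⟩ := exists_ne_functional_comp t hSN (hQ S hS_simple)
  exact hmax (N ⊔ S) (ht.exists_sup hS_simple (hS.not_le_iff_disjoint.1 hSN).symm h hh)
    (left_lt_sup.2 hSN)

end Functional

section SerreTraces

universe v u

variable (k : Type*) [Field k] {C : Type u} [Category.{v} C] [Preadditive C] [Linear k C]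

/-- A trace `τ : Hom(V, S V) → k` making the pairings `(p, f) ↦ τ (p ≫ f)` between `Hom(V, x)`
and `Hom(x, S V)` identify the latter with the dual of the former, for all `x`. It encodes an
isomorphism `Hom(-, S V) ≅ D Hom(V, -)` of functors by its value at the identity of `S V`. -/
structure SerreTrace (S : C ⥤ C) (V : C) where
  trace : (V ⟶ S.obj V) →ₗ[k] k
  exists_trace_comp_eq {x : C} (ξ : Module.Dual k (V ⟶ x)) :
    ∃ f : x ⟶ S.obj V, ∀ p : V ⟶ x, trace (p ≫ f) = ξ p
  eq_zero_of_trace_comp_eq_zero {x : C} (f : x ⟶ S.obj V) :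
    (∀ p : V ⟶ x, trace (p ≫ f) = 0) → f = 0

namespace SerreTrace

variable {k} {S : C ⥤ C} {V V' V'' : C}

theorem hom_ext (τ : SerreTrace k S V) {x : C} {f g : x ⟶ S.obj V}
    (h : ∀ p : V ⟶ x, τ.trace (p ≫ f) = τ.trace (p ≫ g)) : f = g :=
  sub_eq_zero.1 <| τ.eq_zero_of_trace_comp_eq_zero _ fun p ↦ by
    rw [Preadditive.comp_sub, map_sub, h, sub_self]

theorem hom_ext_left (τ : SerreTrace k S V) {x : C} {u v : V ⟶ x}
    (h : ∀ f : x ⟶ S.obj V, τ.trace (u ≫ f) = τ.trace (v ≫ f)) : u = v := by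
  refine Module.forall_dual_apply_eq_zero_iff k (u - v) |>.1 (fun ξ ↦ ?_) |> sub_eq_zero.1
  obtain ⟨f, hf⟩ := τ.exists_trace_comp_eq ξ
  rw [← hf, Preadditive.sub_comp, map_sub, h, sub_self]

theorem exists_trace_comp_eq_left (τ : SerreTrace k S V) {x : C} [FiniteDimensional k (V ⟶ x)]
    (η : Module.Dual k (x ⟶ S.obj V)) : ∃ u : V ⟶ x, ∀ f, τ.trace (u ≫ f) = η f := by
  let pairing : (x ⟶ S.obj V) →ₗ[k] Module.Dual k (V ⟶ x) :=
    LinearMap.mk₂ k (fun f p ↦ τ.trace (p ≫ f)) (by simp) (by simp) (by simp) (by simp)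
  have pairing_bijective : Function.Bijective pairing :=
    ⟨fun f g h ↦ τ.hom_ext fun p ↦ LinearMap.congr_fun h p, fun ξ ↦
      (τ.exists_trace_comp_eq ξ).imp fun f hf ↦ LinearMap.ext hf⟩
  let e := LinearEquiv.ofBijective pairing pairing_bijective
  refine ⟨(Module.evalEquiv k (V ⟶ x)).symm (η ∘ₗ e.symm), fun f ↦ ?_⟩
  have : e f ((Module.evalEquiv k (V ⟶ x)).symm (η ∘ₗ e.symm)) = η (e.symm (e f)) :=
    Module.apply_evalEquiv_symm_apply ..
  rwa [e.symm_apply_apply] at this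

/-- The Serre trace of a finite biproduct, summing the traces of the diagonal components. -/
def biproduct [S.Additive] {ι : Type} [Fintype ι] (V : ι → C) [Limits.HasBiproduct V]
    (τ : ∀ i, SerreTrace k S (V i)) : SerreTrace k S (⨁ V) where
  trace := ∑ i, (τ i).trace ∘ₗ
    Linear.rightComp k _ (S.map (Limits.biproduct.π V i)) ∘ₗ
      Linear.leftComp k _ (Limits.biproduct.ι V i)
  exists_trace_comp_eq {x} ξ := by
    classical
    choose f hf using fun i ↦
      (τ i).exists_trace_comp_eq (ξ ∘ₗ Linear.leftComp k x (Limits.biproduct.π V i))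
    refine ⟨∑ i, f i ≫ S.map (Limits.biproduct.ι V i), fun p ↦ ?_⟩
    have component (i : ι) :
        (∑ j, f j ≫ S.map (Limits.biproduct.ι V j)) ≫ S.map (Limits.biproduct.π V i) = f i := by
      rw [Preadditive.sum_comp, Finset.sum_eq_single i]
      · rw [Category.assoc, ← S.map_comp, Limits.biproduct.ι_π_self, S.map_id, Category.comp_id]
      · intro j _ hji
        rw [Category.assoc, ← S.map_comp, Limits.biproduct.ι_π_ne _ hji, S.map_zero,
          Limits.comp_zero]
      · simp
    have hf' (i : ι) : (τ i).trace (Limits.biproduct.ι V i ≫ p ≫ f i) =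
        ξ (Limits.biproduct.π V i ≫ Limits.biproduct.ι V i ≫ p) := by
      simpa using hf i (Limits.biproduct.ι V i ≫ p)
    simp only [LinearMap.sum_apply, LinearMap.comp_apply, Linear.leftComp_apply,
      Linear.rightComp_apply, Category.assoc, component, hf']
    simp only [← Category.assoc]
    rw [← map_sum, ← Preadditive.sum_comp, Limits.biproduct.total, Category.id_comp]
  eq_zero_of_trace_comp_eq_zero {x} f hf := by
    classical
    have component (i : ι) : f ≫ S.map (Limits.biproduct.π V i) = 0 := by
      refine (τ i).eq_zero_of_trace_comp_eq_zero _ fun p ↦ ?_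
      have := hf (Limits.biproduct.π V i ≫ p)
      simp only [LinearMap.sum_apply, LinearMap.comp_apply, Linear.leftComp_apply,
        Linear.rightComp_apply, Category.assoc] at this
      rw [Finset.sum_eq_single i] at this
      · rwa [← Category.assoc, Limits.biproduct.ι_π_self, Category.id_comp] at this
      · intro j _ hji
        rw [← Category.assoc, Limits.biproduct.ι_π_ne _ hji, Limits.zero_comp, map_zero]
      · simp
    rw [← Category.comp_id f, ← S.map_id, ← Limits.biproduct.total, S.map_sum,
      Preadditive.comp_sum]
    refine Finset.sum_eq_zero fun i _ ↦ ?_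
    rw [S.map_comp, ← Category.assoc, component, Limits.zero_comp]

theorem exists_twist [FiniteDimensional k (V ⟶ V')] (τ : SerreTrace k S V)
    (τ' : SerreTrace k S V') (w : V ⟶ V') :
    ∃ u : V ⟶ V', ∀ γ : V' ⟶ S.obj V, τ'.trace (γ ≫ S.map w) = τ.trace (u ≫ γ) :=
  (τ.exists_trace_comp_eq_left (τ'.trace ∘ₗ Linear.rightComp k V' (S.map w))).imp
    fun _ hu γ ↦ (hu γ).symm

variable [S.Additive] [S.Full] [S.Faithful]

/-- The inverse of the Nakayama automorphism determined by Serre traces: the adjoint of `S.map`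
with respect to the trace pairings. -/
def twist [FiniteDimensional k (V ⟶ V')] (τ : SerreTrace k S V) (τ' : SerreTrace k S V') :
    (V ⟶ V') ≃+ (V ⟶ V') :=
  AddEquiv.ofBijective
    (AddMonoidHom.mk' (fun w ↦ (exists_twist τ τ' w).choose) fun w w' ↦
      τ.hom_ext_left fun γ ↦ by
        rw [Preadditive.add_comp, map_add, ← (exists_twist τ τ' _).choose_spec,
          ← (exists_twist τ τ' _).choose_spec, ← (exists_twist τ τ' _).choose_spec,
          S.map_add, Preadditive.comp_add, map_add])
    ⟨fun w w' h ↦ S.map_injective <| τ'.hom_ext fun γ ↦ by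
        rw [(exists_twist τ τ' w).choose_spec, (exists_twist τ τ' w').choose_spec]
        exact congrArg (fun u ↦ τ.trace (u ≫ γ)) h,
      fun u ↦ by
        obtain ⟨f, hf⟩ := τ'.exists_trace_comp_eq (τ.trace ∘ₗ Linear.leftComp k (S.obj V) u)
        obtain ⟨w, rfl⟩ := S.map_surjective f
        exact ⟨w, τ.hom_ext_left fun γ ↦
          (exists_twist τ τ' w).choose_spec γ ▸ hf γ⟩⟩

theorem trace_comp_map [FiniteDimensional k (V ⟶ V')] (τ : SerreTrace k S V)
    (τ' : SerreTrace k S V') (w : V ⟶ V') (γ : V' ⟶ S.obj V) :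
    τ'.trace (γ ≫ S.map w) = τ.trace (twist τ τ' w ≫ γ) :=
  (exists_twist τ τ' w).choose_spec γ

theorem twist_comp [FiniteDimensional k (V ⟶ V')] [FiniteDimensional k (V' ⟶ V'')]
    [FiniteDimensional k (V ⟶ V'')] (τ : SerreTrace k S V) (τ' : SerreTrace k S V')
    (τ'' : SerreTrace k S V'') (v : V ⟶ V') (w : V' ⟶ V'') :
    twist τ τ'' (v ≫ w) = twist τ τ' v ≫ twist τ' τ'' w :=
  τ.hom_ext_left fun γ ↦ by
    rw [← trace_comp_map, S.map_comp, ← Category.assoc, trace_comp_map τ' τ'', ← Category.assoc,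
      trace_comp_map, Category.assoc]

end SerreTrace

end SerreTraces

section AdditiveClosure

open Limits

universe v u v' u'

variable {C : Type u} [Category.{v} C] [Preadditive C] [HasFiniteBiproducts C]

/-- The sum of `n` copies of `T`. -/
abbrev copies (T : C) (n : ℕ) : C := ⨁ fun _ : Fin n ↦ T

/-- `V` lies in `add T`: it is a direct summand of a finite sum of copies of `T`. -/
def InAdd (T V : C) : Prop := ∃ n, Nonempty (Retract V (copies T n))

theorem InAdd.copies (T : C) (n : ℕ) : InAdd T (copies T n) := ⟨n, ⟨.refl _⟩⟩

theorem InAdd.self (T : C) : InAdd T T :=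
  ⟨1, ⟨⟨biproduct.ι (fun _ : Fin 1 ↦ T) 0, biproduct.π (fun _ : Fin 1 ↦ T) 0, by simp⟩⟩⟩

theorem InAdd.eq_zero {T V Y : C} (hV : InAdd T V) {f : V ⟶ Y} (hf : ∀ p : T ⟶ V, p ≫ f = 0) :
    f = 0 := by
  obtain ⟨n, ⟨ρ⟩⟩ := hV
  have : ρ.r ≫ f = 0 := biproduct.hom_ext' _ _ fun j ↦ by simp [← Category.assoc, hf]
  rw [← Category.id_comp f, ← ρ.retract, Category.assoc, this, comp_zero]

theorem InAdd.injective_obj {D : Type u'} [Category.{v'} D] [Abelian D] (G : C ⥤ D) [G.Additive]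
    {T V : C} (hV : InAdd T V) [Injective (G.obj T)] : Injective (G.obj V) := by
  obtain ⟨n, ⟨ρ⟩⟩ := hV
  have : Injective (G.obj (_root_.copies T n)) := .of_iso (G.mapBiproduct fun _ : Fin n ↦ T).symm
    (inferInstanceAs (Injective (⨁ fun _ : Fin n ↦ G.obj T)))
  exact (ρ.map G).injective

end AdditiveClosure

section HomFunctor

open Limits

universe v u

/-- The functor `Hom(T, -)` to modules over `(End T)ᵐᵒᵖ`, that is, to right `End T`-modules. -/
abbrev homFrom {C : Type u} [Category.{v} C] [Preadditive C] (T : C) :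
    C ⥤ ModuleCat.{v} (End T)ᵐᵒᵖ :=
  preadditiveCoyonedaObj T

variable {C : Type u} [Category.{v} C] [Preadditive C] {T : C}

theorem homFrom_map_eq_zero_iff {Y Y' : C} {f : Y ⟶ Y'} :
    (homFrom T).map f = 0 ↔ ∀ p : T ⟶ Y, p ≫ f = 0 :=
  ⟨fun h p ↦ ConcreteCategory.congr_hom h p, fun h ↦ ConcreteCategory.hom_ext _ _ h⟩

instance isScalarTower_homFrom {k : Type*} [Field k] [Linear k C] (Y : C) :
    IsScalarTower k (End T)ᵐᵒᵖ (T ⟶ Y) :=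
  ⟨fun c r p ↦ Linear.smul_comp T T Y c (unop r) p⟩

theorem isNoetherianRing_end_op (k : Type*) [Field k] [Linear k C] (T : C)
    [FiniteDimensional k (T ⟶ T)] : IsNoetherianRing (End T)ᵐᵒᵖ :=
  have : Module.Finite k (End T)ᵐᵒᵖ := .equiv (MulOpposite.opLinearEquiv k : (T ⟶ T) ≃ₗ[k] _)
  .of_finite k _

variable [HasFiniteBiproducts C]

/-- The inclusions of the summands form a basis of the free module `Hom(T, Tⁿ)`. -/
def copiesBasis (T : C) (n : ℕ) :
    Module.Basis (Fin n) (End T)ᵐᵒᵖ ((homFrom T).obj (copies T n)) :=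
  .ofEquivFun
    { toFun p j := MulOpposite.op (show T ⟶ T from p ≫ biproduct.π (fun _ ↦ T) j)
      map_add' p q := funext fun _ ↦ congrArg MulOpposite.op (Preadditive.add_comp _ _ _ p q _)
      map_smul' r p := funext fun _ ↦ congrArg MulOpposite.op (Category.assoc r.unop p _)
      invFun r := biproduct.lift fun j ↦ show T ⟶ T from (r j).unop
      left_inv _ := biproduct.hom_ext _ _ fun j ↦ biproduct.lift_π _ j
      right_inv _ := funext fun j ↦ congrArg MulOpposite.op (biproduct.lift_π _ j) }

theorem copiesBasis_apply (n : ℕ) (j : Fin n) :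
    copiesBasis T n j = biproduct.ι (fun _ ↦ T) j := by
  refine (congrFun (Module.Basis.coe_ofEquivFun _) j).trans <| biproduct.hom_ext _ _ fun i ↦ ?_
  refine (biproduct.lift_π _ i).trans ?_
  obtain rfl | hij := eq_or_ne j i
  · simp only [Pi.single_eq_same, biproduct.ι_π_self]
    rfl
  · simp only [Pi.single_eq_of_ne hij.symm, biproduct.ι_π_ne _ hij]
    rfl

theorem exists_homFrom_map_eq {V Y : C} (hV : InAdd T V)
    (φ : (homFrom T).obj V ⟶ (homFrom T).obj Y) : ∃ f : V ⟶ Y, (homFrom T).map f = φ := by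
  obtain ⟨n, ⟨ρ⟩⟩ := hV
  let ψ := (homFrom T).map ρ.r ≫ φ
  let f : copies T n ⟶ Y := biproduct.desc fun j ↦ ψ (biproduct.ι (fun _ ↦ T) j)
  have map_f : (homFrom T).map f = ψ :=
    ModuleCat.hom_ext <| (copiesBasis T n).ext fun j ↦ by
      rw [copiesBasis_apply]
      exact biproduct.ι_desc (fun j ↦ ψ (biproduct.ι (fun _ ↦ T) j)) j
  refine ⟨ρ.i ≫ f, ?_⟩
  rw [CategoryTheory.Functor.map_comp, map_f, ← Functor.map_comp_assoc, ρ.retract,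
    CategoryTheory.Functor.map_id, Category.id_comp]

theorem exists_epi_homFrom_copies (M : ModuleCat.{v} (End T)ᵐᵒᵖ) [Module.Finite (End T)ᵐᵒᵖ M] :
    ∃ (n : ℕ) (c : (homFrom T).obj (copies T n) ⟶ M), Epi c := by
  obtain ⟨n, m, hm⟩ := Module.Finite.exists_fin (R := (End T)ᵐᵒᵖ) (M := M)
  exact ⟨n, ModuleCat.ofHom ((copiesBasis T n).constr ℕ m), (ModuleCat.epi_iff_range_eq_top _).2
    (((copiesBasis T n).constr_range ℕ).trans hm)⟩

theorem exists_presentation [IsNoetherianRing (End T)ᵐᵒᵖ]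
    (M : ModuleCat.{v} (End T)ᵐᵒᵖ) [Module.Finite (End T)ᵐᵒᵖ M] :
    ∃ (m n : ℕ) (w : copies T m ⟶ copies T n) (c : (homFrom T).obj (copies T n) ⟶ M)
      (hwc : (homFrom T).map w ≫ c = 0),
      Epi c ∧ (ShortComplex.mk ((homFrom T).map w) c hwc).Exact := by
  obtain ⟨n, c, hc⟩ := exists_epi_homFrom_copies M
  have : Module.Finite (End T)ᵐᵒᵖ ((homFrom T).obj (copies T n)) := .of_basis (copiesBasis T n)
  obtain ⟨m, d, hd⟩ := exists_epi_homFrom_copies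
    (ModuleCat.of (End T)ᵐᵒᵖ (LinearMap.ker c.hom))
  obtain ⟨w, hw⟩ := exists_homFrom_map_eq (.copies T m)
    (d ≫ ModuleCat.ofHom (LinearMap.ker c.hom).subtype)
  have hwc : (homFrom T).map w ≫ c = 0 := by
    rw [hw]
    exact ConcreteCategory.hom_ext _ _ fun p ↦ LinearMap.mem_ker.1 (d p).2
  refine ⟨m, n, w, c, hwc, hc, (ShortComplex.moduleCat_exact_iff _).2 fun x hx ↦ ?_⟩
  obtain ⟨p, hp⟩ := (ModuleCat.epi_iff_surjective d).1 hd ⟨x, hx⟩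
  refine ⟨p, ?_⟩
  change (homFrom T).map w p = x
  rw [hw]
  exact congrArg Subtype.val hp

end HomFunctor

section ClusterTilting

open Limits Pretriangulated

universe v u

variable {C : Type u} [Category.{v} C] [Preadditive C] [HasZeroObject C] [HasShift C ℤ]
  [∀ n : ℤ, (shiftFunctor C n).Additive] [Pretriangulated C]

instance isHomological_homFrom (T : C) : (homFrom T).IsHomological where
  exact X hX := (ShortComplex.moduleCat_exact_iff _).2 fun p hp ↦ by
    obtain ⟨q, hq⟩ := Triangle.coyoneda_exact₂ X hX (show T ⟶ X.obj₂ from p) hp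
    exact ⟨q, hq.symm⟩

/-- `T` is cluster tilting: `add T` consists of the objects `X` with `Hom(T, X[1]) = 0`. -/
def IsClusterTilting (T : C) : Prop :=
  ∀ X : C, (∀ f : T ⟶ X⟦(1 : ℤ)⟧, f = 0) ↔ InAdd T X

/-- The double shift `X ↦ X[2]`, the Serre functor of a 2-Calabi-Yau category, in a form
whose values are iterated single shifts on the nose. -/
abbrev doubleShift (C : Type u) [Category.{v} C] [HasShift C ℤ] : C ⥤ C :=
  shiftFunctor C (1 : ℤ) ⋙ shiftFunctor C (1 : ℤ)

variable {T : C}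

namespace IsClusterTilting

theorem hom_shift_eq_zero (hT : IsClusterTilting T) {V W : C} (hV : InAdd T V) (hW : InAdd T W)
    (f : V ⟶ W⟦(1 : ℤ)⟧) : f = 0 :=
  hV.eq_zero fun p ↦ (hT W).2 hW (p ≫ f)

theorem isZero_homFrom_shift (hT : IsClusterTilting T) {V : C} (hV : InAdd T V) :
    IsZero ((homFrom T).obj (V⟦(1 : ℤ)⟧)) :=
  ModuleCat.isZero_iff_subsingleton.2 (subsingleton_of_forall_eq (0 : T ⟶ _) ((hT V).2 hV))

theorem epi_homFrom_map (hT : IsClusterTilting T) {W V Y : C} (hW : InAdd T W) {i : W ⟶ V}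
    {q : V ⟶ Y} {h : Y ⟶ W⟦(1 : ℤ)⟧} (hd : Triangle.mk i q h ∈ distTriang C) :
    Epi ((homFrom T).map q) :=
  ((homFrom T).map_distinguished_exact _ (rot_of_distTriang _ hd)).epi_f
    ((hT.isZero_homFrom_shift hW).eq_of_tgt _ _)

theorem exists_approximation {k : Type*} [Field k] [Linear k C] (hT : IsClusterTilting T) (Y : C)
    [FiniteDimensional k (T ⟶ Y)] :
    ∃ (W V : C) (i : W ⟶ V) (q : V ⟶ Y) (h : Y ⟶ W⟦(1 : ℤ)⟧),
      InAdd T W ∧ InAdd T V ∧ Triangle.mk i q h ∈ distTriang C := by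
  let b := Module.finBasis k (T ⟶ Y)
  let q : copies T (Module.finrank k (T ⟶ Y)) ⟶ Y := biproduct.desc b
  have lift (p : T ⟶ Y) : ∃ p', p' ≫ q = p := by
    refine ⟨biproduct.lift fun j ↦ b.repr p j • 𝟙 T, ?_⟩
    rw [biproduct.lift_desc]
    simp [b.sum_repr]
  obtain ⟨W, i, h, hd⟩ := distinguished_cocone_triangle₁ q
  refine ⟨W, _, i, q, h, (hT W).1 fun f ↦ ?_, .copies T _, hd⟩
  obtain ⟨p, rfl⟩ :=
    Triangle.coyoneda_exact₁ _ hd f (hT.hom_shift_eq_zero (.self T) (.copies T _) _)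
  obtain ⟨p', rfl⟩ := lift p
  exact (Category.assoc ..).trans <|
    (congrArg (p' ≫ ·) (comp_distTriang_mor_zero₂₃ _ hd)).trans comp_zero

theorem exists_lift_of_distTriang (hT : IsClusterTilting T) {V V₁ y Z : C} (hV : InAdd T V)
    (hV₁ : InAdd T V₁) {u : y ⟶ (doubleShift C).obj V₁} {b : (doubleShift C).obj V₁ ⟶ Z}
    {a : Z ⟶ y⟦(1 : ℤ)⟧} (hd : Triangle.mk u b a ∈ distTriang C)
    (g : (doubleShift C).obj V ⟶ y⟦(1 : ℤ)⟧) : ∃ l, l ≫ a = g := by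
  obtain ⟨g', hg'⟩ := (doubleShift C).map_surjective (X := V) (Y := V₁⟦(1 : ℤ)⟧) (g ≫ u⟦1⟧')
  rw [hT.hom_shift_eq_zero hV hV₁ g', Functor.map_zero] at hg'
  exact (Triangle.coyoneda_exact₁ _ hd g hg'.symm).imp fun _ ↦ Eq.symm

section HomFinite

variable (k : Type*) [Field k] [Linear k C] [∀ X Y : C, FiniteDimensional k (X ⟶ Y)]

include k

theorem full_homFrom (hT : IsClusterTilting T) : (homFrom T).Full where
  map_surjective {Y Y'} φ := by
    obtain ⟨W, V, i, q, h, hW, hV, hd⟩ := hT.exists_approximation (k := k) Y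
    have := hT.epi_homFrom_map hW hd
    obtain ⟨x, hx⟩ := exists_homFrom_map_eq hV ((homFrom T).map q ≫ φ)
    have hix : i ≫ x = 0 := hW.eq_zero <| homFrom_map_eq_zero_iff.1 <| by
      rw [(homFrom T).map_comp, hx, ← Functor.map_comp_assoc,
        show i ≫ q = 0 from comp_distTriang_mor_zero₁₂ _ hd, Functor.map_zero, zero_comp]
    obtain ⟨γ, rfl⟩ := Triangle.yoneda_exact₂ _ hd x hix
    exact ⟨γ, (cancel_epi ((homFrom T).map q)).1 <| ((homFrom T).map_comp q γ).symm.trans hx⟩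

theorem eq_zero_of_homFrom_map_eq_zero (hT : IsClusterTilting T) {V Y : C} (hV : InAdd T V)
    {γ : Y ⟶ (doubleShift C).obj V} (hγ : (homFrom T).map γ = 0) : γ = 0 := by
  obtain ⟨W, V', i, q, h, hW, hV', hd⟩ := hT.exists_approximation (k := k) Y
  have hqγ : q ≫ γ = 0 := hV'.eq_zero fun p ↦ by
    rw [← Category.assoc, homFrom_map_eq_zero_iff.1 hγ]
  obtain ⟨g, rfl⟩ := Triangle.yoneda_exact₃ _ hd γ hqγ
  obtain ⟨g', rfl⟩ := (shiftFunctor C (1 : ℤ)).map_surjective g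
  exact (congrArg (h ≫ (shiftFunctor C 1).map ·) (hT.hom_shift_eq_zero hW hV g')).trans
    ((congrArg (h ≫ ·) (Functor.map_zero _ _ _)).trans comp_zero)

theorem exists_shift_coresolution (hT : IsClusterTilting T) (y : C) :
    ∃ (V₁ V₀ : C) (u : y ⟶ (doubleShift C).obj V₁)
      (b : (doubleShift C).obj V₁ ⟶ (doubleShift C).obj V₀)
      (a : (doubleShift C).obj V₀ ⟶ y⟦(1 : ℤ)⟧),
      InAdd T V₁ ∧ InAdd T V₀ ∧ Triangle.mk u b a ∈ distTriang C ∧ Mono ((homFrom T).map u) := by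
  let z := (shiftFunctor C (1 : ℤ)).objPreimage y
  let e : z⟦(1 : ℤ)⟧ ≅ y := (shiftFunctor C (1 : ℤ)).objObjPreimageIso y
  obtain ⟨V₁, V₀, i, q, h, hV₁, hV₀, hd⟩ := hT.exists_approximation (k := k) z
  have hd₄ := rot_of_distTriang _ <| rot_of_distTriang _ <| rot_of_distTriang _ <|
    rot_of_distTriang _ hd
  have : Mono ((homFrom T).map (-h⟦(1 : ℤ)⟧')) :=
    ((homFrom T).map_distinguished_exact _ hd₄).mono_g
      ((hT.isZero_homFrom_shift hV₀).eq_of_src _ _)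
  refine ⟨V₁, V₀, e.inv ≫ (-h⟦1⟧'), i⟦1⟧'⟦1⟧', q⟦1⟧'⟦1⟧' ≫ e.hom⟦1⟧', hV₁, hV₀,
    isomorphic_distinguished _ (rot_of_distTriang _ hd₄) _ <|
      Triangle.isoMk _ _ e.symm (Iso.refl _) (Iso.refl _) ?_ ?_ ?_, ?_⟩
  · exact Category.comp_id _
  · change i⟦1⟧'⟦1⟧' ≫ 𝟙 _ = 𝟙 _ ≫ (-(-i⟦1⟧')⟦1⟧')
    simp
  · change (q⟦1⟧'⟦1⟧' ≫ e.hom⟦1⟧') ≫ e.inv⟦1⟧' = 𝟙 _ ≫ (-(-q⟦1⟧')⟦1⟧')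
    simp [← Functor.map_comp]
  · rw [Functor.map_comp]
    infer_instance

end HomFinite

end IsClusterTilting

end ClusterTilting

section SerreDuality

open Limits Pretriangulated

universe v u

variable {k : Type*} [Field k] {C : Type u} [Category.{v} C] [Preadditive C] [Linear k C]

theorem SerreTrace.exists_smul_eq {S : C ⥤ C} {T : C} (τ : SerreTrace k S T)
    (I : Ideal (End T)ᵐᵒᵖ) (g : I →ₗ[(End T)ᵐᵒᵖ] (homFrom T).obj (S.obj T)) :
    ∃ q : (homFrom T).obj (S.obj T), ∀ r : I, g r = r.1 • q := by
  obtain ⟨ξ, hξ⟩ := LinearMap.exists_extend (p := I.restrictScalars k)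
    (τ.trace ∘ₗ (show I →ₗ[(End T)ᵐᵒᵖ] (T ⟶ S.obj T) from g).restrictScalars k)
  obtain ⟨q, hq⟩ := τ.exists_trace_comp_eq (ξ ∘ₗ (MulOpposite.opLinearEquiv k).toLinearMap)
  refine ⟨q, fun r ↦ τ.hom_ext fun p ↦ ?_⟩
  have trace_g (s : I) : τ.trace (g s) = ξ s := (LinearMap.congr_fun hξ s).symm
  have hp : (p ≫ (show T ⟶ S.obj T from g r)) = g (MulOpposite.op (show End T from p) • r) :=
    (g.map_smul _ r).symm
  rw [hp]
  refine (trace_g _).trans <| (hq (p ≫ (show T ⟶ T from r.1.unop))).symm.trans ?_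
  exact congrArg τ.trace (Category.assoc _ _ _)

theorem SerreTrace.injective_homFrom {S : C ⥤ C} {T : C} (τ : SerreTrace k S T) :
    Injective ((homFrom T).obj (S.obj T)) := by
  have : Module.Injective (End T)ᵐᵒᵖ ((homFrom T).obj (S.obj T)) :=
    Module.Baer.injective fun I g ↦ by
      obtain ⟨q, hq⟩ := τ.exists_smul_eq I g
      exact ⟨LinearMap.toSpanSingleton _ _ q, fun r hr ↦ (hq ⟨r, hr⟩).symm⟩
  exact Module.injective_object_of_injective_module (End T)ᵐᵒᵖ ((homFrom T).obj (S.obj T))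

theorem finrank_homFrom_le {T : C} [∀ X Y : C, FiniteDimensional k (X ⟶ Y)]
    [(homFrom T).Full] {Y Y' : C} {M : Type v} [AddCommGroup M]
    [Module k M] [Module (End T)ᵐᵒᵖ M] [IsScalarTower k (End T)ᵐᵒᵖ M]
    (φ : M ≃ₗ[(End T)ᵐᵒᵖ] (T ⟶ Y)) :
    Module.finrank k (M →ₗ[(End T)ᵐᵒᵖ] (T ⟶ Y')) ≤ Module.finrank k (Y ⟶ Y') := by
  let Φ : (Y ⟶ Y') →ₗ[k] M →ₗ[(End T)ᵐᵒᵖ] (T ⟶ Y') :=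
    { toFun γ := ((homFrom T).map γ).hom ∘ₗ φ.toLinearMap
      map_add' γ γ' := LinearMap.ext fun m ↦ Preadditive.comp_add _ _ _ (φ m) γ γ'
      map_smul' c γ := LinearMap.ext fun m ↦ Linear.comp_smul _ _ _ (φ m) c γ }
  refine LinearMap.finrank_le_finrank_of_surjective (f := Φ) fun ψ ↦ ?_
  obtain ⟨γ, hγ⟩ := (homFrom T).map_surjective (ModuleCat.ofHom (ψ ∘ₗ φ.symm.toLinearMap) :
    (homFrom T).obj Y ⟶ (homFrom T).obj Y')
  refine ⟨γ, LinearMap.ext fun m ↦ (ConcreteCategory.congr_hom hγ (φ m)).trans ?_⟩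
  exact congrArg ψ (φ.symm_apply_apply m)

variable [HasZeroObject C] [HasShift C ℤ] [∀ n : ℤ, (shiftFunctor C n).Additive]
  [Pretriangulated C] {T : C}

namespace IsClusterTilting

theorem nonempty_iso_of_exact (hT : IsClusterTilting T) {P₁ P₀ y : C} (hP₁ : InAdd T P₁)
    {w : P₁ ⟶ P₀} {p : P₀ ⟶ y} {δ : y ⟶ P₁⟦(1 : ℤ)⟧} (hd : Triangle.mk w p δ ∈ distTriang C)
    {M : ModuleCat.{v} (End T)ᵐᵒᵖ} {c : (homFrom T).obj P₀ ⟶ M} [Epi c]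
    {hwc : (homFrom T).map w ≫ c = 0}
    (exact : (ShortComplex.mk ((homFrom T).map w) c hwc).Exact) :
    Nonempty (M ≅ (homFrom T).obj y) :=
  have := hT.epi_homFrom_map hP₁ hd
  nonempty_iso_of_exact_of_epi (c' := (homFrom T).map p) exact
    ((homFrom T).map_distinguished_exact _ hd)

theorem exists_iso_homFrom [IsNoetherianRing (End T)ᵐᵒᵖ] (hT : IsClusterTilting T)
    (M : ModuleCat.{v} (End T)ᵐᵒᵖ) [Module.Finite (End T)ᵐᵒᵖ M] :
    ∃ y : C, Nonempty (M ≅ (homFrom T).obj y) := by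
  obtain ⟨m, n, w, c, hwc, hc, exact⟩ := exists_presentation M
  obtain ⟨y, p, δ, hd⟩ := distinguished_cocone_triangle w
  exact ⟨y, hT.nonempty_iso_of_exact (.copies T m) hd exact⟩

variable [∀ X Y : C, FiniteDimensional k (X ⟶ Y)]

theorem exists_serreTrace (hT : IsClusterTilting T) (hC : ∀ X Y : C,
    Module.finrank k (X ⟶ Y) = Module.finrank k (Y ⟶ (doubleShift C).obj X)) :
    Nonempty (SerreTrace k (doubleShift C) T) := by
  have := isNoetherianRing_end_op k T
  have := hT.full_homFrom k
  obtain ⟨t, ht⟩ := exists_nondegenerate_functional (k := k) (R := (End T)ᵐᵒᵖ)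
    (Q := T ⟶ (doubleShift C).obj T) fun M _ ↦ by
      obtain ⟨y, ⟨φ⟩⟩ := hT.exists_iso_homFrom (ModuleCat.of (End T)ᵐᵒᵖ M)
      let φ' : M ≃ₗ[(End T)ᵐᵒᵖ] (T ⟶ y) := φ.toLinearEquiv
      rw [(φ'.restrictScalars k).finrank_eq, hC T y]
      exact finrank_homFrom_le φ'
  have eq_zero {x : C} (f : x ⟶ (doubleShift C).obj T) (hf : ∀ p : T ⟶ x, t (p ≫ f) = 0) :
      f = 0 :=
    hT.eq_zero_of_homFrom_map_eq_zero k (.self T) <| homFrom_map_eq_zero_iff.2 fun p ↦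
      ht _ fun r ↦ (congrArg t (Category.assoc r.unop p f)).symm.trans (hf (r.unop ≫ p))
  refine ⟨⟨t, fun {x} ξ ↦ ?_, eq_zero⟩⟩
  let pairing : (x ⟶ (doubleShift C).obj T) →ₗ[k] Module.Dual k (T ⟶ x) :=
    LinearMap.mk₂ k (fun f p ↦ t (p ≫ f)) (by simp) (by simp) (by simp) (by simp)
  have pairing_injective : Function.Injective pairing :=
    (injective_iff_map_eq_zero pairing).2 fun f hf ↦ eq_zero f (LinearMap.congr_fun hf)
  obtain ⟨f, hf⟩ := (LinearMap.injective_iff_surjective_of_finrank_eq_finrank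
    ((hC T x).symm.trans Subspace.dual_finrank_eq.symm)).1 pairing_injective ξ
  exact ⟨f, LinearMap.congr_fun hf⟩

end IsClusterTilting

end SerreDuality

section AuslanderReiten

open Limits Pretriangulated

universe v u

variable {k : Type*} [Field k] {C : Type u} [Category.{v} C] [Preadditive C] [Linear k C]
  [∀ X Y : C, FiniteDimensional k (X ⟶ Y)] {T : C}

theorem SerreTrace.exists_comp_eq_of_subsingleton_ext [HasFiniteBiproducts C] {S : C ⥤ C}
    [S.Additive] [S.Full] [S.Faithful] {P₁ P₀ x z : C} (hP₁ : InAdd T P₁) (hP₀ : InAdd T P₀)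
    (τ₁ : SerreTrace k S P₁) (τ₀ : SerreTrace k S P₀) {w : P₁ ⟶ P₀}
    {M : ModuleCat.{v} (End T)ᵐᵒᵖ} {c : (homFrom T).obj P₀ ⟶ M} [Epi c]
    {hc : (homFrom T).map (twist τ₁ τ₀ w) ≫ c = 0}
    (exact : (ShortComplex.mk ((homFrom T).map (twist τ₁ τ₀ w)) c hc).Exact)
    [Subsingleton (Abelian.Ext.{v} M ((homFrom T).obj x) 1)]
    (U : x ⟶ z) [Mono ((homFrom T).map U)] {h : x ⟶ S.obj P₁} (hw : h ≫ S.map w = 0) :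
    ∃ g : z ⟶ S.obj P₁, U ≫ g = h ∧ g ≫ S.map w = 0 := by
  let L : (P₁ ⟶ x) × (P₀ ⟶ z) →ₗ[k] (P₁ ⟶ z) :=
    (Linear.rightComp k P₁ U).coprod (Linear.leftComp k z (twist τ₁ τ₀ w))
  let ξ : Module.Dual k ((P₁ ⟶ x) × (P₀ ⟶ z)) :=
    τ₁.trace ∘ₗ Linear.rightComp k P₁ h ∘ₗ LinearMap.fst k _ _
  have ker_le : ξ ∈ (LinearMap.ker L).dualAnnihilator := by
    refine (Submodule.mem_dualAnnihilator _).2 fun ⟨p, v⟩ hpv ↦ ?_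
    have hpU : p ≫ U = twist τ₁ τ₀ w ≫ (-v) := by
      rw [Preadditive.comp_neg]
      exact eq_neg_of_add_eq_zero_left hpv
    obtain ⟨φ, hφ⟩ := exists_factorization_of_subsingleton_ext hc exact ((homFrom T).map U)
      (p := (homFrom T).map p) (v := (homFrom T).map (-v)) <| by
        rw [← Functor.map_comp, hpU, Functor.map_comp]
    obtain ⟨q, rfl⟩ := exists_homFrom_map_eq hP₀ φ
    have hp : p = twist τ₁ τ₀ w ≫ q := sub_eq_zero.1 <| hP₁.eq_zero <|
      homFrom_map_eq_zero_iff.1 <| by rw [Functor.map_sub, Functor.map_comp, hφ, sub_self]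
    change τ₁.trace (p ≫ h) = 0
    rw [hp, Category.assoc, ← trace_comp_map, Category.assoc, hw, comp_zero, map_zero]
  rw [← LinearMap.range_dualMap_eq_dualAnnihilator_ker] at ker_le
  obtain ⟨Ξ, hΞ⟩ := ker_le
  obtain ⟨g, hg⟩ := τ₁.exists_trace_comp_eq Ξ
  refine ⟨g, τ₁.hom_ext fun p ↦ ?_, τ₀.eq_zero_of_trace_comp_eq_zero _ fun v ↦ ?_⟩
  · rw [← Category.assoc, hg]
    simpa [L, ξ] using LinearMap.congr_fun hΞ (p, 0)
  · rw [← Category.assoc, trace_comp_map τ₁ τ₀, ← Category.assoc, hg]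
    simpa [L, ξ] using LinearMap.congr_fun hΞ (0, v)

variable [HasZeroObject C] [HasShift C ℤ] [∀ n : ℤ, (shiftFunctor C n).Additive]
  [Pretriangulated C]

namespace IsClusterTilting

theorem exists_homFrom_map_comp_eq (hT : IsClusterTilting T) {P₁ P₀ x y V₁ V₀ V₁' : C}
    (hP₁ : InAdd T P₁) (hP₀ : InAdd T P₀) (hV₁ : InAdd T V₁) (hV₁' : InAdd T V₁')
    (τ₁ : SerreTrace k (doubleShift C) P₁) (τ₀ : SerreTrace k (doubleShift C) P₀)
    {w : P₁ ⟶ P₀} {p : P₀ ⟶ y} {δ : y ⟶ P₁⟦(1 : ℤ)⟧} (hd : Triangle.mk w p δ ∈ distTriang C)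
    {u : y ⟶ (doubleShift C).obj V₁} {b : (doubleShift C).obj V₁ ⟶ V₀} {a : V₀ ⟶ y⟦(1 : ℤ)⟧}
    (hy : Triangle.mk u b a ∈ distTriang C)
    (U : x ⟶ (doubleShift C).obj V₁') [Mono ((homFrom T).map U)]
    {M : ModuleCat.{v} (End T)ᵐᵒᵖ} {c : (homFrom T).obj P₀ ⟶ M} [Epi c]
    {hc : (homFrom T).map (SerreTrace.twist τ₁ τ₀ w) ≫ c = 0}
    (exact : (ShortComplex.mk ((homFrom T).map (SerreTrace.twist τ₁ τ₀ w)) c hc).Exact)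
    [Subsingleton (Abelian.Ext.{v} M ((homFrom T).obj x) 1)] (f : x ⟶ y⟦(1 : ℤ)⟧) :
    ∃ l : x ⟶ V₀, (homFrom T).map (l ≫ a) = (homFrom T).map f := by
  have hd₃ := rot_of_distTriang _ (rot_of_distTriang _ (rot_of_distTriang _ hd))
  have δ_comp_w : δ⟦(1 : ℤ)⟧' ≫ (doubleShift C).map w = 0 :=
    ((shiftFunctor C (1 : ℤ)).map_comp δ (w⟦1⟧')).symm.trans <|
      (congrArg _ (comp_distTriang_mor_zero₃₁ _ hd)).trans (Functor.map_zero _ _ _)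
  obtain ⟨g, hUg, hgw⟩ := SerreTrace.exists_comp_eq_of_subsingleton_ext hP₁ hP₀ τ₁ τ₀ exact U
    (h := f ≫ δ⟦1⟧') (by rw [Category.assoc, δ_comp_w, comp_zero])
  obtain ⟨g', rfl⟩ : ∃ g', g' ≫ δ⟦1⟧' = g := by
    obtain ⟨g', hg'⟩ := Triangle.coyoneda_exact₁ _ hd₃ g <| by
      change g ≫ (-w⟦1⟧')⟦1⟧' = 0
      rw [Functor.map_neg, Preadditive.comp_neg]
      exact neg_eq_zero.2 hgw
    exact ⟨-g', (Preadditive.neg_comp ..).trans <| (Preadditive.comp_neg ..).symm.trans hg'.symm⟩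
  obtain ⟨l, rfl⟩ := hT.exists_lift_of_distTriang hV₁' hV₁ hy g'
  refine ⟨U ≫ l, sub_eq_zero.1 ?_⟩
  obtain ⟨q, hq⟩ := Triangle.coyoneda_exact₃ _ hd₃ ((U ≫ l) ≫ a - f) <| by
    change _ ≫ (-δ⟦1⟧') = 0
    simp [← hUg]
  rw [← Functor.map_sub, hq]
  exact ((homFrom T).map_comp _ _).trans <|
    (congrArg (· ≫ _) ((hT.isZero_homFrom_shift hP₀).eq_of_tgt ((homFrom T).map q) 0)).trans
      zero_comp

theorem subsingleton_ext_two (hT : IsClusterTilting T) (τ : SerreTrace k (doubleShift C) T)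
    {P₁ P₀ y : C} (hP₁ : InAdd T P₁) (hP₀ : InAdd T P₀)
    (τ₁ : SerreTrace k (doubleShift C) P₁) (τ₀ : SerreTrace k (doubleShift C) P₀)
    {w : P₁ ⟶ P₀} {p : P₀ ⟶ y} {δ : y ⟶ P₁⟦(1 : ℤ)⟧} (hd : Triangle.mk w p δ ∈ distTriang C)
    {M : ModuleCat.{v} (End T)ᵐᵒᵖ} {c : (homFrom T).obj P₀ ⟶ M} [Epi c]
    {hc : (homFrom T).map (SerreTrace.twist τ₁ τ₀ w) ≫ c = 0}
    (exact : (ShortComplex.mk ((homFrom T).map (SerreTrace.twist τ₁ τ₀ w)) c hc).Exact)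
    (x : C) [Subsingleton (Abelian.Ext.{v} M ((homFrom T).obj x) 1)] :
    Subsingleton (Abelian.Ext.{v} ((homFrom T).obj x) ((homFrom T).obj y) 2) := by
  obtain ⟨V₁, V₀, u, b, a, hV₁, hV₀, hy, hu⟩ := hT.exists_shift_coresolution k y
  obtain ⟨V₁', _, U, _, _, hV₁', _, _, hU⟩ := hT.exists_shift_coresolution k x
  have injective {V : C} (hV : InAdd T V) : Injective ((homFrom T).obj ((doubleShift C).obj V)) :=
    haveI : Injective ((doubleShift C ⋙ homFrom T).obj T) := τ.injective_homFrom
    hV.injective_obj (doubleShift C ⋙ homFrom T)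
  have := injective hV₁
  have := injective hV₀
  have := hT.full_homFrom k
  refine subsingleton_ext_two_of_injective_coresolution (i := (homFrom T).map u)
    (d₀ := (homFrom T).map b) (d₁ := (homFrom T).map a) _ _
    ((homFrom T).map_distinguished_exact _ hy)
    ((homFrom T).map_distinguished_exact _ (rot_of_distTriang _ hy)) fun φ ↦ ?_
  obtain ⟨f, rfl⟩ := (homFrom T).map_surjective φ
  obtain ⟨l, hl⟩ :=
    hT.exists_homFrom_map_comp_eq hP₁ hP₀ hV₁ hV₁' τ₁ τ₀ hd hy U exact f
  exact ⟨(homFrom T).map l, ((homFrom T).map_comp l a).symm.trans hl⟩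

end IsClusterTilting

end AuslanderReiten

section TwistStableIdeals

open Limits Pretriangulated

universe v u

variable {k : Type*} [Field k] {C : Type u} [Category.{v} C] [Preadditive C] [Linear k C]
  [∀ X Y : C, FiniteDimensional k (X ⟶ Y)] {T : C}

theorem SerreTrace.exists_twisted_presentation {S : C ⥤ C} [S.Additive] [S.Full] [S.Faithful]
    (τ : SerreTrace k S T) {I : Submodule (End T)ᵐᵒᵖ (End T)}
    (hI : ∀ a : T ⟶ T, twist τ τ a ∈ I ↔ a ∈ I) [HasFiniteBiproducts C] {P₁ P₀ : C}
    (hP₀ : InAdd T P₀) (τ₁ : SerreTrace k S P₁) (τ₀ : SerreTrace k S P₀) {w : P₁ ⟶ P₀}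
    {c : (homFrom T).obj P₀ ⟶ ModuleCat.of (End T)ᵐᵒᵖ I} [Epi c]
    {hwc : (homFrom T).map w ≫ c = 0}
    (exact : (ShortComplex.mk ((homFrom T).map w) c hwc).Exact) :
    ∃ (c' : (homFrom T).obj P₀ ⟶ ModuleCat.of (End T)ᵐᵒᵖ I)
      (h : (homFrom T).map (twist τ₁ τ₀ w) ≫ c' = 0),
      Epi c' ∧ (ShortComplex.mk ((homFrom T).map (twist τ₁ τ₀ w)) c' h).Exact := by
  obtain ⟨q, hq⟩ := exists_homFrom_map_eq (Y := T) hP₀ (c ≫ ModuleCat.ofHom I.subtype)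
  have val_c (p : T ⟶ P₀) : (c p).1 = p ≫ q :=
    (ConcreteCategory.congr_hom hq (show (homFrom T).obj P₀ from p)).symm
  have twist_comp_q (p : T ⟶ P₀) : twist τ τ₀ p ≫ twist τ₀ τ q = twist τ τ (p ≫ q) :=
    (twist_comp ..).symm
  have twist_comp_w (p : T ⟶ P₁) : twist τ τ₁ p ≫ twist τ₁ τ₀ w = twist τ τ₀ (p ≫ w) :=
    (twist_comp ..).symm
  have mem (p : T ⟶ P₀) : p ≫ twist τ₀ τ q ∈ I := by
    obtain ⟨p, rfl⟩ := (twist τ τ₀).surjective p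
    rw [twist_comp_q, hI, ← val_c]
    exact (c p).2
  let c' : (homFrom T).obj P₀ ⟶ ModuleCat.of (End T)ᵐᵒᵖ I :=
    ModuleCat.ofHom (((homFrom T).map (twist τ₀ τ q)).hom.codRestrict I mem)
  have comp_eq_zero (p : T ⟶ P₁) : c (p ≫ w) = 0 := ConcreteCategory.congr_hom hwc p
  refine ⟨c', ConcreteCategory.hom_ext _ _ fun p ↦ Subtype.ext ?_,
    (ModuleCat.epi_iff_surjective _).2 fun ⟨a, ha⟩ ↦ ?_,
    (ShortComplex.moduleCat_exact_iff _).2 fun p hp ↦ ?_⟩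
  · obtain ⟨p, rfl⟩ := (twist τ τ₁).surjective p
    change (twist τ τ₁ p ≫ twist τ₁ τ₀ w) ≫ twist τ₀ τ q = 0
    rw [twist_comp_w, twist_comp_q, ← val_c, comp_eq_zero]
    exact map_zero _
  · obtain ⟨a, rfl⟩ := (twist τ τ).surjective a
    obtain ⟨p, hp⟩ := (ModuleCat.epi_iff_surjective c).1 ‹_› ⟨a, (hI a).1 ha⟩
    refine ⟨twist τ τ₀ p, Subtype.ext ?_⟩
    exact (twist_comp_q p).trans <|
      congrArg (twist τ τ) ((val_c p).symm.trans (congrArg Subtype.val hp))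
  · obtain ⟨p, rfl⟩ := (twist τ τ₀).surjective p
    have hpq : twist τ τ₀ p ≫ twist τ₀ τ q = 0 := congrArg Subtype.val hp
    rw [twist_comp_q, ← val_c] at hpq
    have hcp : c p = 0 := Subtype.ext ((twist τ τ).injective (hpq.trans (map_zero _).symm))
    obtain ⟨r, rfl⟩ := (ShortComplex.moduleCat_exact_iff _).1 exact p hcp
    exact ⟨twist τ τ₁ r, twist_comp_w r⟩

variable [HasZeroObject C] [HasShift C ℤ] [∀ n : ℤ, (shiftFunctor C n).Additive]
  [Pretriangulated C]

instance moduleFinite_op_self (A : Type*) [Ring A] : Module.Finite Aᵐᵒᵖ A :=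
  .of_surjective (LinearMap.toSpanSingleton Aᵐᵒᵖ A 1) fun a ↦ ⟨MulOpposite.op a, one_mul a⟩

theorem IsClusterTilting.subsingleton_ext_two_of_twist_stable (hT : IsClusterTilting T)
    (τ : SerreTrace k (doubleShift C) T) {I : Submodule (End T)ᵐᵒᵖ (End T)}
    (hI : ∀ a : T ⟶ T, SerreTrace.twist τ τ a ∈ I ↔ a ∈ I) [IsNoetherianRing (End T)ᵐᵒᵖ]
    (X : ModuleCat.{v} (End T)ᵐᵒᵖ) [Module.Finite (End T)ᵐᵒᵖ X]
    [Subsingleton (Abelian.Ext.{v} (ModuleCat.of (End T)ᵐᵒᵖ I) X 1)] :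
    Subsingleton (Abelian.Ext.{v} X (ModuleCat.of (End T)ᵐᵒᵖ I) 2) := by
  obtain ⟨m, n, w, c, hwc, hc, exact⟩ := exists_presentation (ModuleCat.of (End T)ᵐᵒᵖ I)
  obtain ⟨y, p, δ, hd⟩ := distinguished_cocone_triangle w
  obtain ⟨φ⟩ := hT.nonempty_iso_of_exact (.copies T m) hd exact
  obtain ⟨x, ⟨ψ⟩⟩ := hT.exists_iso_homFrom X
  let τ' (n : ℕ) : SerreTrace k (doubleShift C) (copies T n) :=
    .biproduct (fun _ : Fin n ↦ T) fun _ ↦ τ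
  obtain ⟨c', hwc', hc', exact'⟩ :=
    τ.exists_twisted_presentation hI (.copies T n) (τ' m) (τ' n) exact
  have := subsingleton_ext_of_iso (.refl _) ψ ‹Subsingleton (Abelian.Ext _ X 1)›
  exact subsingleton_ext_of_iso ψ.symm φ.symm <|
    hT.subsingleton_ext_two τ (.copies T m) (.copies T n) (τ' m) (τ' n) hd exact' x

end TwistStableIdeals

section GenIdeal

variable {A B : Type} [Ring A] [Ring B] {e f : A}

theorem genIdeal_le_iff {I : Submodule Aᵐᵒᵖ A} : genIdeal e ≤ I ↔ ∀ b, b * e ∈ I :=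
  Submodule.span_le.trans ⟨fun h b ↦ h ⟨b, rfl⟩, fun h _ ⟨b, hb⟩ ↦ hb ▸ h b⟩

theorem genIdeal_le_genIdeal_iff :
    genIdeal e ≤ genIdeal f ↔ ∀ x : A ⧸ genIdeal f, MulOpposite.op e • x = 0 := by
  rw [genIdeal_le_iff, (Submodule.mkQ_surjective _).forall]
  exact forall_congr' fun b ↦ (Submodule.Quotient.mk_eq_zero (genIdeal f)).symm

theorem map_mem_genIdeal (φ : A →+* B) {a : A} (ha : a ∈ genIdeal e) : φ a ∈ genIdeal (φ e) := by
  induction ha using Submodule.span_induction with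
  | mem x hx =>
    obtain ⟨b, rfl⟩ := hx
    rw [map_mul]
    exact Submodule.subset_span ⟨φ b, rfl⟩
  | zero => rw [map_zero]; exact zero_mem _
  | add x y _ _ hx hy => rw [map_add]; exact add_mem hx hy
  | smul r x _ hx =>
    change φ (x * r.unop) ∈ _
    rw [map_mul]
    exact Submodule.smul_mem _ (MulOpposite.op (φ r.unop)) hx

theorem map_mem_genIdeal_iff (φ : A ≃+* B) {a : A} : φ a ∈ genIdeal (φ e) ↔ a ∈ genIdeal e :=
  ⟨fun h ↦ by simpa using map_mem_genIdeal φ.symm.toRingHom h, map_mem_genIdeal φ.toRingHom⟩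

end GenIdeal

section Idempotents

open Limits Pretriangulated

universe v u

variable {k : Type*} [Field k]

section

variable {C : Type u} [Category.{v} C] [Preadditive C] {T Tₑ y : C} {ε : T ⟶ T} {i : Tₑ ⟶ T}
  {e : T ⟶ Tₑ}

theorem forall_comp_eq_zero_iff_of_split (hie : i ≫ e = 𝟙 Tₑ) (hei : e ≫ i = ε) :
    (∀ m : T ⟶ y, ε ≫ m = 0) ↔ Subsingleton (Tₑ ⟶ y) := by
  subst hei
  refine ⟨fun h ↦ subsingleton_of_forall_eq 0 fun m ↦ ?_, fun _ m ↦ ?_⟩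
  · rw [← Category.id_comp m, ← hie, ← Category.id_comp (i ≫ e), ← hie]
    simpa using i ≫= h (e ≫ m)
  · rw [Category.assoc, Subsingleton.elim (i ≫ m) 0, comp_zero]

theorem forall_comp_eq_zero_iff_of_split' (hie : i ≫ e = 𝟙 Tₑ) (hei : e ≫ i = ε) :
    (∀ m : y ⟶ T, m ≫ ε = 0) ↔ Subsingleton (y ⟶ Tₑ) := by
  subst hei
  refine ⟨fun h ↦ subsingleton_of_forall_eq 0 fun m ↦ ?_, fun _ m ↦ ?_⟩
  · rw [← Category.comp_id m, ← hie, ← Category.comp_id (i ≫ e), ← hie]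
    simpa using h (m ≫ i) =≫ e
  · rw [← Category.assoc, Subsingleton.elim (m ≫ e) 0, zero_comp]

end

variable {C : Type u} [Category.{v} C] [Preadditive C] [Linear k C]
  [∀ X Y : C, FiniteDimensional k (X ⟶ Y)] [IsIdempotentComplete C] {T : C}

theorem SerreTrace.forall_twist_comp_eq_zero_iff {S : C ⥤ C} [S.Additive] [S.Full] [S.Faithful]
    (hS : ∀ X Y : C, Module.finrank k (X ⟶ Y) = Module.finrank k (Y ⟶ S.obj X))
    (τ : SerreTrace k S T) {ε : T ⟶ T} (hε : ε ≫ ε = ε) (y : C) :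
    (∀ m : T ⟶ y, twist τ τ ε ≫ m = 0) ↔ ∀ m : T ⟶ y, ε ≫ m = 0 := by
  obtain ⟨Tₑ, i, e, hie, hei⟩ := IsIdempotentComplete.idempotents_split T ε hε
  calc (∀ m : T ⟶ y, twist τ τ ε ≫ m = 0)
    _ ↔ ∀ g : y ⟶ S.obj T, g ≫ S.map ε = 0 := by
      refine ⟨fun h g ↦ τ.eq_zero_of_trace_comp_eq_zero _ fun m ↦ ?_,
        fun h m ↦ τ.hom_ext_left fun g ↦ ?_⟩
      · rw [← Category.assoc, trace_comp_map τ τ, ← Category.assoc, h, zero_comp, map_zero]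
      · rw [Category.assoc, ← trace_comp_map, Category.assoc, h, comp_zero, zero_comp]
    _ ↔ Subsingleton (y ⟶ S.obj Tₑ) :=
      forall_comp_eq_zero_iff_of_split' (by rw [← S.map_comp, hie, S.map_id])
        (by rw [← S.map_comp, hei])
    _ ↔ Subsingleton (Tₑ ⟶ y) := by
      rw [← Module.finrank_zero_iff (R := k), ← hS, Module.finrank_zero_iff]
    _ ↔ ∀ m : T ⟶ y, ε ≫ m = 0 := (forall_comp_eq_zero_iff_of_split hie hei).symm

end Idempotents

section EndomorphismRing

open Limits Pretriangulated

universe u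

variable {C : Type u} [Category.{0} C] [Preadditive C] {T : C}

theorem genIdeal_le_genIdeal_iff_of_iso {δ ε : End T} {y : C}
    (φ : ModuleCat.of (End T)ᵐᵒᵖ (End T ⧸ genIdeal ε) ≅ (homFrom T).obj y) :
    genIdeal δ ≤ genIdeal ε ↔ ∀ m : T ⟶ y, δ ≫ m = 0 := by
  rw [genIdeal_le_genIdeal_iff, φ.toLinearEquiv.toEquiv.forall_congr_left]
  exact forall_congr' fun m ↦ (LinearEquiv.map_eq_zero_iff φ.toLinearEquiv).symm.trans <|
    Eq.congr_left ((φ.toLinearEquiv.map_smul _ _).trans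
      (congrArg _ (φ.toLinearEquiv.apply_symm_apply m)))

variable {k : Type*} [Field k] [Linear k C] [∀ X Y : C, FiniteDimensional k (X ⟶ Y)]

/-- The inverse Nakayama automorphism `SerreTrace.twist` of the endomorphism ring. -/
def SerreTrace.twistEnd {S : C ⥤ C} [S.Additive] [S.Full] [S.Faithful] (τ : SerreTrace k S T) :
    End T ≃+* End T where
  __ := twist τ τ
  map_mul' f g := twist_comp τ τ τ g f

variable [HasZeroObject C] [HasShift C ℤ] [∀ n : ℤ, (shiftFunctor C n).Additive]
  [Pretriangulated C] [IsIdempotentComplete C]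

namespace IsClusterTilting

theorem genIdeal_twistEnd (hT : IsClusterTilting T)
    (hC : ∀ X Y : C, Module.finrank k (X ⟶ Y) = Module.finrank k (Y ⟶ (doubleShift C).obj X))
    (τ : SerreTrace k (doubleShift C) T) {ε : End T} (hε : IsIdempotentElem ε) :
    genIdeal (τ.twistEnd ε) = genIdeal ε := by
  have := isNoetherianRing_end_op k T
  have le_iff (δ : End T) : genIdeal (τ.twistEnd ε) ≤ genIdeal δ ↔ genIdeal ε ≤ genIdeal δ := by
    obtain ⟨y, ⟨φ⟩⟩ := hT.exists_iso_homFrom (ModuleCat.of (End T)ᵐᵒᵖ (End T ⧸ genIdeal δ))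
    rw [genIdeal_le_genIdeal_iff_of_iso φ, genIdeal_le_genIdeal_iff_of_iso φ]
    exact SerreTrace.forall_twist_comp_eq_zero_iff hC τ hε y
  exact le_antisymm ((le_iff _).2 le_rfl) ((le_iff _).1 le_rfl)

theorem subsingleton_ext_one_quotient (hT : IsClusterTilting T)
    (hC : ∀ X Y : C, Module.finrank k (X ⟶ Y) = Module.finrank k (Y ⟶ (doubleShift C).obj X))
    {ε : End T} (hε : IsIdempotentElem ε) (X : ModuleCat.{0} (End T)ᵐᵒᵖ)
    [Module.Finite (End T)ᵐᵒᵖ X]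
    [Subsingleton (Abelian.Ext.{0} X (ModuleCat.of (End T)ᵐᵒᵖ (End T)) 1)]
    [Subsingleton (Abelian.Ext.{0} (ModuleCat.of (End T)ᵐᵒᵖ (genIdeal ε)) X 1)] :
    Subsingleton (Abelian.Ext.{0} X (ModuleCat.of (End T)ᵐᵒᵖ (End T ⧸ genIdeal ε)) 1) := by
  have := isNoetherianRing_end_op k T
  obtain ⟨τ⟩ := hT.exists_serreTrace hC
  have twist_stable (a : End T) : τ.twistEnd a ∈ genIdeal ε ↔ a ∈ genIdeal ε := by
    rw [← hT.genIdeal_twistEnd hC τ hε, map_mem_genIdeal_iff, hT.genIdeal_twistEnd hC τ hε]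
  have := hT.subsingleton_ext_two_of_twist_stable τ twist_stable X
  have exact := LinearMap.exact_subtype_mkQ (genIdeal ε)
  have shortExact := ModuleCat.shortComplex_shortExact
    (ModuleCat.shortComplexOfCompEqZero _ _ exact.linearMap_comp_eq_zero) exact
    (genIdeal ε).subtype_injective (genIdeal ε).mkQ_surjective
  exact subsingleton_ext_of_shortExact shortExact

end IsClusterTilting

end EndomorphismRing

section Semilinear

universe v

variable {R S : Type v} [Ring R] [Ring S] {φ : R ≃+* S}

attribute [local instance] RingHomInvPair.of_ringEquiv

theorem nonempty_iso_restrictScalars {M : ModuleCat.{v} R} {N : ModuleCat.{v} S}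
    (f : M ≃ₛₗ[(φ : R →+* S)] N) :
    Nonempty (M ≅ (ModuleCat.restrictScalars.{v} φ.toRingHom).obj N) :=
  have : IsIso (ModuleCat.semilinearMapAddEquiv φ.toRingHom M N f.toLinearMap) :=
    (ConcreteCategory.isIso_iff_bijective _).2 f.bijective
  ⟨asIso (ModuleCat.semilinearMapAddEquiv φ.toRingHom M N f.toLinearMap)⟩

theorem subsingleton_ext_congr {M N : ModuleCat.{v} R} {M' N' : ModuleCat.{v} S}
    (f : M ≃ₛₗ[(φ : R →+* S)] M') (g : N ≃ₛₗ[(φ : R →+* S)] N') (n : ℕ) :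
    Subsingleton (Abelian.Ext.{v} M N n) ↔ Subsingleton (Abelian.Ext.{v} M' N' n) := by
  obtain ⟨f'⟩ := nonempty_iso_restrictScalars f
  obtain ⟨g'⟩ := nonempty_iso_restrictScalars g
  have map_bijective := Functor.mapExt_bijective_of_preservesProjectiveObjects
    (ModuleCat.restrictScalars.{v} φ.toRingHom) M' N' n
  rw [(Equiv.ofBijective _ map_bijective).subsingleton_congr]
  exact ⟨subsingleton_ext_of_iso f' g', subsingleton_ext_of_iso f'.symm g'.symm⟩

end Semilinear

section Transport

attribute [local instance] RingHomInvPair.of_ringEquiv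

variable {A B : Type} [Ring A] [Ring B]

/-- A ring isomorphism as a semilinear isomorphism of right regular modules. -/
def rightRegularEquiv (φ : A ≃+* B) : A ≃ₛₗ[(φ.op : Aᵐᵒᵖ →+* Bᵐᵒᵖ)] B where
  __ := φ
  map_smul' r a := map_mul φ a r.unop

theorem map_rightRegularEquiv_genIdeal (φ : A ≃+* B) (e : A) :
    (genIdeal e).map (rightRegularEquiv φ).toLinearMap = genIdeal (φ e) := by
  ext b
  obtain ⟨a, rfl⟩ := φ.surjective b
  rw [map_mem_genIdeal_iff]
  exact (rightRegularEquiv φ).injective.mem_set_image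

theorem subsingleton_ext_one_quotient_of_ringEquiv (φ : A ≃+* B) {e : A}
    (hB : ∀ (X : ModuleCat.{0} Bᵐᵒᵖ) [Module.Finite Bᵐᵒᵖ X],
      Subsingleton (Abelian.Ext.{0} X (ModuleCat.of Bᵐᵒᵖ B) 1) →
      Subsingleton (Abelian.Ext.{0} (ModuleCat.of Bᵐᵒᵖ (genIdeal (φ e))) X 1) →
      Subsingleton (Abelian.Ext.{0} X (ModuleCat.of Bᵐᵒᵖ (B ⧸ genIdeal (φ e))) 1))
    (X : ModuleCat.{0} Aᵐᵒᵖ) [Module.Finite Aᵐᵒᵖ X]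
    (hX : Subsingleton (Abelian.Ext.{0} X (ModuleCat.of Aᵐᵒᵖ A) 1))
    (hJ : Subsingleton (Abelian.Ext.{0} (ModuleCat.of Aᵐᵒᵖ (genIdeal e)) X 1)) :
    Subsingleton (Abelian.Ext.{0} X (ModuleCat.of Aᵐᵒᵖ (A ⧸ genIdeal e)) 1) := by
  let X' := (ModuleCat.restrictScalars.{0} φ.symm.op.toRingHom).obj X
  let ξ : X ≃ₛₗ[(φ.op : Aᵐᵒᵖ →+* Bᵐᵒᵖ)] X' :=
    { AddEquiv.refl X with
      map_smul' r x := congrArg (· • x) (φ.op.symm_apply_apply r).symm }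
  have : Module.Finite Bᵐᵒᵖ X' := .of_surjective ξ.toLinearMap ξ.surjective
  let ρ := rightRegularEquiv φ
  have map_ρ := map_rightRegularEquiv_genIdeal φ e
  rw [subsingleton_ext_congr (φ := φ.op) (N := .of _ A) (N' := .of _ B) ξ ρ] at hX
  rw [subsingleton_ext_congr (φ := φ.op) (M := .of _ (genIdeal e)) (M' := .of _ (genIdeal (φ e)))
    (ρ.ofSubmodules _ _ map_ρ) ξ] at hJ
  rw [subsingleton_ext_congr (φ := φ.op) (N := .of _ (A ⧸ genIdeal e))
    (N' := .of _ (B ⧸ genIdeal (φ e))) ξ (Submodule.Quotient.equiv _ _ ρ map_ρ)]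
  exact hB X' hX hJ

end Transport

namespace CYTiltedWitness

open Limits

attribute [local instance] cat pre lin shift zero shiftAdd tri biprod idem homFinite

variable {k A : Type} [Field k] [Ring A] [Algebra k A] (W : CYTiltedWitness k A)

theorem isClusterTilting : IsClusterTilting W.T := fun X ↦
  (W.clusterTilting X).trans ⟨fun ⟨n, s, r, h⟩ ↦ ⟨n, ⟨⟨s, r, h⟩⟩⟩,
    fun ⟨n, ⟨ρ⟩⟩ ↦ ⟨n, ρ.i, ρ.r, ρ.retract⟩⟩

theorem finrank_hom_eq (X Y : W.C) :
    Module.finrank k (X ⟶ Y) = Module.finrank k (Y ⟶ (doubleShift W.C).obj X) := by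
  obtain ⟨serre⟩ := W.serre X Y
  let shiftIso := (shiftFunctorAdd' W.C (1 : ℤ) 1 2 (by norm_num)).app X
  rw [serre.finrank_eq, Subspace.dual_finrank_eq]
  exact (Linear.homCongr k (.refl Y) shiftIso).finrank_eq

include W in
theorem subsingleton_ext_one_quotient {e : A} (he : IsIdempotentElem e)
    (X : ModuleCat.{0} Aᵐᵒᵖ) [Module.Finite Aᵐᵒᵖ X]
    (hX : Subsingleton (Abelian.Ext.{0} X (ModuleCat.of Aᵐᵒᵖ A) 1))
    (hJ : Subsingleton (Abelian.Ext.{0} (ModuleCat.of Aᵐᵒᵖ (genIdeal e)) X 1)) :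
    Subsingleton (Abelian.Ext.{0} X (ModuleCat.of Aᵐᵒᵖ (A ⧸ genIdeal e)) 1) := by
  obtain ⟨α⟩ := W.algIso
  refine subsingleton_ext_one_quotient_of_ringEquiv α.toRingEquiv (fun X' _ _ _ ↦ ?_) X hX hJ
  exact W.isClusterTilting.subsingleton_ext_one_quotient W.finrank_hom_eq (he.map α) X'

end CYTiltedWitness

theorem ext1_perp_with_B_vanishes_general
    {k A : Type} [Field k] [Ring A] [Algebra k A] (hA : IsCYTilted k A) {e : A}
    (he : IsIdempotentElem e) (X : ModuleCat.{0} Aᵐᵒᵖ) [Module.Finite Aᵐᵒᵖ X] (hX : IsCM k A X)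
    (h1 : Subsingleton (rext1 k A (ModuleCat.of Aᵐᵒᵖ ↥(genIdeal e)) X)) :
    Subsingleton (rext1 k A X (ModuleCat.of Aᵐᵒᵖ (A ⧸ genIdeal e))) := by
  obtain ⟨W⟩ := hA
  rw [IsCM, subsingleton_leftDerived_ext_iff] at hX
  rw [subsingleton_leftDerived_ext_iff] at h1 ⊢
  exact W.subsingleton_ext_one_quotient he X hX h1

/-- Let `A` be a 2-Calabi-Yau tilted algebra, `J = A e A`, `B = A/J`,
and `X ∈ J^⊥`. Then `Ext¹_A(X, B) = 0`. -/
theorem ext1_perp_with_B_vanishes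
    (k A : Type) [Field k] [IsAlgClosed k] [Ring A] [Algebra k A] [FiniteDimensional k A]
    (hA : IsCYTilted k A) (e : A) (he : IsPrimitiveIdempotent e)
    (X : ModuleCat.{0} Aᵐᵒᵖ) [Module.Finite Aᵐᵒᵖ X] (hX : IsCM k A X)
    (h1 : Subsingleton (rext1 k A (ModuleCat.of Aᵐᵒᵖ ↥(genIdeal e)) X))
    (h2 : Subsingleton (rext1 k A X (ModuleCat.of Aᵐᵒᵖ ↥(genIdeal e)))) :
    Subsingleton (rext1 k A X (ModuleCat.of Aᵐᵒᵖ (A ⧸ genIdeal e))) :=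
  ext1_perp_with_B_vanishes_general hA he.1 X hX h1
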